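/- arXiv:2007.06543 — 9 statements merged into one kernel-verified Lean document; each statement's English description precedes it below -/
import Mathlib

section
/- Let V0, V1, V2 be real numbers with V := V1*V2 + V0*V2 + V0*V1 ≠ 0, and let V̂ be the 3×3 real matrix with V̂_{mm} = 2*V_m and V̂_{mn} = -V_n for m ≠ n. Then ρ := (V1*V2/V, V0*V2/V, V0*V1/V) is the UNIQUE vector x ∈ ℝ³ satisfying V̂ x = 0 and x_0 + x_1 + x_2 = 1. -/
/-- The directing matrix of a ternary statistical experiment:
`V̂_{mm} = 2 V_m`, `V̂_{mn} = -V_n` for `m ≠ n`. -/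
def dirMatrix (V0 V1 V2 : ℝ) : Matrix (Fin 3) (Fin 3) ℝ :=
  !![2*V0, -V1, -V2;
     -V0, 2*V1, -V2;
     -V0, -V1, 2*V2]

/-- The equilibrium vector `ρ = (V1V2/V, V0V2/V, V0V1/V)` with
`V = V1V2 + V0V2 + V0V1`. -/
noncomputable def equil (V0 V1 V2 : ℝ) : Fin 3 → ℝ :=
  ![V1*V2 / (V1*V2 + V0*V2 + V0*V1),
    V0*V2 / (V1*V2 + V0*V2 + V0*V1),
    V0*V1 / (V1*V2 + V0*V2 + V0*V1)]

theorem equilibrium_unique (V0 V1 V2 : ℝ)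
    (hV : V1*V2 + V0*V2 + V0*V1 ≠ 0) :
    ∀ x : Fin 3 → ℝ,
      ((dirMatrix V0 V1 V2).mulVec x = 0 ∧ x 0 + x 1 + x 2 = 1) ↔
        x = equil V0 V1 V2 := by
  intro x
  have key : (dirMatrix V0 V1 V2).mulVec x = 0 ↔
      (2*V0*x 0 - V1*x 1 - V2*x 2 = 0 ∧ -V0*x 0 + 2*V1*x 1 - V2*x 2 = 0 ∧
        -V0*x 0 - V1*x 1 + 2*V2*x 2 = 0) := by
    rw [funext_iff, Fin.forall_fin_succ, Fin.forall_fin_succ, Fin.forall_fin_succ]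
    simp [dirMatrix, Matrix.mulVec, dotProduct, Fin.sum_univ_three, sub_eq_add_neg]
  rw [key]
  constructor
  · rintro ⟨⟨h0, h1, h2⟩, hs⟩
    have hab : V0*x 0 = V1*x 1 := by linarith
    have hac : V0*x 0 = V2*x 2 := by linarith
    funext i
    fin_cases i
    · change x 0 = V1*V2 / (V1*V2 + V0*V2 + V0*V1)
      rw [eq_div_iff hV]
      linear_combination V2*hab + V1*hac + V1*V2*hs
    · change x 1 = V0*V2 / (V1*V2 + V0*V2 + V0*V1)
      rw [eq_div_iff hV]
      linear_combination (-V2-V0)*hab + V0*hac + V0*V2*hs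
    · change x 2 = V0*V1 / (V1*V2 + V0*V2 + V0*V1)
      rw [eq_div_iff hV]
      linear_combination V0*hab + (-V1-V0)*hac + V0*V1*hs
  · intro h
    have e0 : x 0 = V1*V2 / (V1*V2 + V0*V2 + V0*V1) := by rw [h]; rfl
    have e1 : x 1 = V0*V2 / (V1*V2 + V0*V2 + V0*V1) := by rw [h]; rfl
    have e2 : x 2 = V0*V1 / (V1*V2 + V0*V2 + V0*V1) := by rw [h]; rfl
    rw [e0, e1, e2]
    refine ⟨⟨by ring, by ring, by ring⟩, ?_⟩
    rw [← add_div, ← add_div, div_self hV]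
end

section
/- Let V0, V1, V2 be real numbers with V := V1*V2 + V0*V2 + V0*V1 ≠ 0, and let V̂ be the 3×3 real matrix with V̂_{mm} = 2*V_m and V̂_{mn} = -V_n for m ≠ n. Then the kernel of V̂ (as a linear map ℝ³ → ℝ³) equals the one-dimensional span of the vector (V1*V2, V0*V2, V0*V1). -/
theorem kernel_eq_span (V0 V1 V2 : ℝ)
    (hV : V1*V2 + V0*V2 + V0*V1 ≠ 0) :
    LinearMap.ker (Matrix.mulVecLin (dirMatrix V0 V1 V2)) =
      Submodule.span ℝ {![V1*V2, V0*V2, V0*V1]} := by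
  ext x
  rw [LinearMap.mem_ker, Submodule.mem_span_singleton, Matrix.mulVecLin_apply]
  constructor
  · intro h
    have h0 := congrFun h 0
    have h1 := congrFun h 1
    have h2 := congrFun h 2
    simp [dirMatrix, Matrix.mulVec, dotProduct, Fin.sum_univ_three] at h0 h1 h2
    have e1 : V0 * x 0 = V1 * x 1 := by linarith
    have e2 : V0 * x 0 = V2 * x 2 := by linarith
    refine ⟨(x 0 + x 1 + x 2) / (V1*V2 + V0*V2 + V0*V1), ?_⟩
    ext i
    fin_cases i
    · simp only [Pi.smul_apply, smul_eq_mul]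
      simp
      rw [div_mul_eq_mul_div, div_eq_iff hV]
      linear_combination (-V2) * e1 - V1 * e2
    · simp only [Pi.smul_apply, smul_eq_mul]
      simp
      rw [div_mul_eq_mul_div, div_eq_iff hV]
      linear_combination (V2) * e1 + V0 * (e1 - e2)
    · simp only [Pi.smul_apply, smul_eq_mul]
      simp
      rw [div_mul_eq_mul_div, div_eq_iff hV]
      linear_combination V1 * e2 + V0 * (e2 - e1)
  · rintro ⟨c, rfl⟩
    ext i
    fin_cases i <;>
      simp [dirMatrix, Matrix.mulVec, dotProduct, Fin.sum_univ_three] <;> ring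
end

section
/- Let V0, V1, V2 be real numbers and let V̂ be the 3×3 real matrix with V̂_{mm} = 2*V_m and V̂_{mn} = -V_n for m ≠ n. Then the characteristic polynomial of V̂ equals λ · (λ² - 2(V0 + V1 + V2)λ + 3V), where V := V1*V2 + V0*V2 + V0*V1. In particular det V̂ = 0 and trace V̂ = 2(V0 + V1 + V2). -/
open Polynomial in
theorem charpoly_dirMatrix (V0 V1 V2 : ℝ) :
    (dirMatrix V0 V1 V2).charpoly =
      X * (X ^ 2 - C (2 * (V0 + V1 + V2)) * X
        + C (3 * (V1*V2 + V0*V2 + V0*V1))) ∧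
    (dirMatrix V0 V1 V2).det = 0 ∧
    (dirMatrix V0 V1 V2).trace = 2 * (V0 + V1 + V2) := by
  refine ⟨?_, ?_, ?_⟩
  · rw [Matrix.charpoly, Matrix.det_fin_three]
    simp [Matrix.charmatrix_apply, dirMatrix, Matrix.diagonal_apply]
    have h2 : (C (2 : ℝ) : ℝ[X]) = 2 := rfl
    have h3 : (C (3 : ℝ) : ℝ[X]) = 3 := rfl
    simp only [h2, h3]
    ring
  · rw [Matrix.det_fin_three]
    simp [dirMatrix]
    ring
  · rw [Matrix.trace_fin_three]
    simp [dirMatrix]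
    ring
end

section
/- Let V0, V1, V2 be strictly positive real numbers and let V̂ be the 3×3 real matrix with V̂_{mm} = 2*V_m and V̂_{mn} = -V_n for m ≠ n. Then every nonzero complex eigenvalue λ of V̂ has strictly positive real part. Concretely, the nonzero eigenvalues are the roots of λ² - 2(V0+V1+V2)λ + 3V with V := V1*V2 + V0*V2 + V0*V1, and each root has positive real part. -/
theorem eigenvalues_pos_re_of_pos (V0 V1 V2 : ℝ)
    (h0 : 0 < V0) (h1 : 0 < V1) (h2 : 0 < V2) :
    (∀ μ : ℂ, Module.End.HasEigenvalue
        (Matrix.mulVecLin ((dirMatrix V0 V1 V2).map Complex.ofReal)) μ →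
        μ ≠ 0 → 0 < μ.re) ∧
    (∀ μ : ℂ, μ ≠ 0 →
      (Module.End.HasEigenvalue
          (Matrix.mulVecLin ((dirMatrix V0 V1 V2).map Complex.ofReal)) μ ↔
        μ ^ 2 - 2 * (↑V0 + ↑V1 + ↑V2) * μ
          + 3 * ((V1*V2 + V0*V2 + V0*V1 : ℝ) : ℂ) = 0)) ∧
    (∀ μ : ℂ, μ ^ 2 - 2 * (↑V0 + ↑V1 + ↑V2) * μ
          + 3 * ((V1*V2 + V0*V2 + V0*V1 : ℝ) : ℂ) = 0 → 0 < μ.re) := by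
  have key : ∀ μ : ℂ, μ ^ 2 - 2 * (↑V0 + ↑V1 + ↑V2) * μ
          + 3 * ((V1*V2 + V0*V2 + V0*V1 : ℝ) : ℂ) = 0 → 0 < μ.re := by
    intro μ h
    have hre := congrArg Complex.re h
    have him := congrArg Complex.im h
    simp [pow_two] at hre him
    have hb : μ.im * (μ.re - (V0 + V1 + V2)) = 0 := by linarith
    have hV : 0 < V1*V2 + V0*V2 + V0*V1 := by positivity
    have hS : 0 < V0 + V1 + V2 := by positivity
    rcases mul_eq_zero.mp hb with hb | hb
    · rw [hb] at hre
      by_contra hc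
      push Not at hc
      nlinarith [mul_nonneg hS.le (neg_nonneg.mpr hc), mul_self_nonneg μ.re]
    · linarith
  have eig : ∀ μ : ℂ, μ ≠ 0 →
      (Module.End.HasEigenvalue
          (Matrix.mulVecLin ((dirMatrix V0 V1 V2).map Complex.ofReal)) μ ↔
        μ ^ 2 - 2 * (↑V0 + ↑V1 + ↑V2) * μ
          + 3 * ((V1*V2 + V0*V2 + V0*V1 : ℝ) : ℂ) = 0) := by
    intro μ hμ
    have h1 : Module.End.HasEigenvalue
          (Matrix.mulVecLin ((dirMatrix V0 V1 V2).map Complex.ofReal)) μ ↔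
        ∃ v, v ≠ 0 ∧ ((dirMatrix V0 V1 V2).map Complex.ofReal - Matrix.scalar (Fin 3) μ).mulVec v = 0 := by
      constructor
      · intro h
        obtain ⟨v, hv⟩ := h.exists_hasEigenvector
        refine ⟨v, hv.2, ?_⟩
        have := hv.apply_eq_smul
        rw [Matrix.mulVecLin_apply] at this
        rw [Matrix.sub_mulVec, this]
        ext i
        simp [Matrix.scalar_apply, Matrix.mulVec_diagonal]
      · rintro ⟨v, hv, h⟩
        refine Module.End.hasEigenvalue_of_hasEigenvector (x := v)
          (Module.End.hasEigenvector_iff.mpr ⟨Module.End.mem_eigenspace_iff.mpr ?_, hv⟩)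
        rw [Matrix.mulVecLin_apply]
        rw [Matrix.sub_mulVec, sub_eq_zero] at h
        rw [h]
        ext i
        simp [Matrix.scalar_apply, Matrix.mulVec_diagonal]
    rw [h1, Matrix.exists_mulVec_eq_zero_iff]
    have hd : ((dirMatrix V0 V1 V2).map Complex.ofReal - Matrix.scalar (Fin 3) μ).det
        = -μ * (μ ^ 2 - 2 * (↑V0 + ↑V1 + ↑V2) * μ
          + 3 * ((V1*V2 + V0*V2 + V0*V1 : ℝ) : ℂ)) := by
      rw [Matrix.det_fin_three]
      simp [dirMatrix, Matrix.scalar_apply]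
      ring
    rw [hd]
    simp [hμ]
  exact ⟨fun μ h hμ => key μ ((eig μ hμ).mp h), eig, key⟩
end

section
/- Let V0, V1, V2 be strictly positive real numbers, let V̂ be the 3×3 real matrix with V̂_{mm} = 2*V_m and V̂_{mn} = -V_n for m ≠ n, set V := V1*V2 + V0*V2 + V0*V1 and ρ := (V1*V2/V, V0*V2/V, V0*V1/V). Then there exists ε₀ > 0 such that for every step size ε with 0 < ε ≤ ε₀ and every sequence P : ℕ → ℝ³ satisfying P(k+1) - P(k) = -ε V̂ P(k) for all k ≥ 0 and the balance condition P_0(0) + P_1(0) + P_2(0) = 1, one has P(k) → ρ as k → ∞; in particular the main factor probability satisfies lim_{k→∞} P_0(k) = ρ_0 (attractive equilibrium). -/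
theorem abs_comb (a b c x y z : ℝ) (ha : 0 ≤ a) (hb : 0 ≤ b) (hc : 0 ≤ c) :
    |a * x + b * y + c * z| ≤ a * |x| + b * |y| + c * |z| := by
  calc |a * x + b * y + c * z| ≤ |a * x| + |b * y| + |c * z| := abs_add_three _ _ _
    _ = _ := by rw [abs_mul, abs_mul, abs_mul, abs_of_nonneg ha, abs_of_nonneg hb, abs_of_nonneg hc]

theorem attractive_equilibrium (V0 V1 V2 : ℝ)
    (h0 : 0 < V0) (h1 : 0 < V1) (h2 : 0 < V2) :
    ∃ ε₀ > (0:ℝ), ∀ ε : ℝ, 0 < ε → ε ≤ ε₀ →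
      ∀ P : ℕ → Fin 3 → ℝ,
        (∀ k : ℕ, P (k+1) - P k = -(ε • (dirMatrix V0 V1 V2).mulVec (P k))) →
        P 0 0 + P 0 1 + P 0 2 = 1 →
        Filter.Tendsto P Filter.atTop (nhds (equil V0 V1 V2)) ∧
        Filter.Tendsto (fun k => P k 0) Filter.atTop (nhds (equil V0 V1 V2 0)) := by
  obtain ⟨m, hm, hm0, hm1, hm2⟩ : ∃ m : ℝ, 0 < m ∧ m ≤ V0 ∧ m ≤ V1 ∧ m ≤ V2 :=
    ⟨min V0 (min V1 V2), by positivity, by simp, by simp, by simp⟩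
  refine ⟨1 / (3 * (V0 + V1 + V2)), by positivity, ?_⟩
  intro ε hε hle P hP hsum
  have hle' : ε * (3 * (V0 + V1 + V2)) ≤ 1 := by
    rwa [le_div_iff₀ (by positivity)] at hle
  have hV : 0 < V1*V2 + V0*V2 + V0*V1 := by positivity
  obtain ⟨q, hq⟩ : ∃ q, q = equil V0 V1 V2 := ⟨_, rfl⟩
  have hq0 : q 0 = V1*V2 / (V1*V2 + V0*V2 + V0*V1) := by rw [hq]; rfl
  have hq1 : q 1 = V0*V2 / (V1*V2 + V0*V2 + V0*V1) := by rw [hq]; rfl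
  have hq2 : q 2 = V0*V1 / (V1*V2 + V0*V2 + V0*V1) := by rw [hq]; rfl
  have hqs : q 0 + q 1 + q 2 = 1 := by
    rw [hq0, hq1, hq2]; field_simp
  have e01 : V0 * q 0 = V1 * q 1 := by rw [hq0, hq1]; ring
  have e02 : V0 * q 0 = V2 * q 2 := by rw [hq0, hq2]; ring
  rw [← hq]
  have r0 : ∀ k, P (k+1) 0 = P k 0 - ε * (2*V0 * P k 0 - V1 * P k 1 - V2 * P k 2) := by
    intro k
    have := congrFun (hP k) 0
    simp [dirMatrix, Matrix.mulVec, dotProduct, Fin.sum_univ_three] at this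
    linarith
  have r1 : ∀ k, P (k+1) 1 = P k 1 - ε * (-V0 * P k 0 + 2 * V1 * P k 1 - V2 * P k 2) := by
    intro k
    have := congrFun (hP k) 1
    simp [dirMatrix, Matrix.mulVec, dotProduct, Fin.sum_univ_three] at this
    linarith
  have r2 : ∀ k, P (k+1) 2 = P k 2 - ε * (-V0 * P k 0 - V1 * P k 1 + 2 * V2 * P k 2) := by
    intro k
    have := congrFun (hP k) 2
    simp [dirMatrix, Matrix.mulVec, dotProduct, Fin.sum_univ_three] at this
    linarith
  have hs : ∀ k, P k 0 + P k 1 + P k 2 = 1 := by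
    intro k
    induction k with
    | zero => exact hsum
    | succ k ih => rw [r0, r1, r2]; linarith
  have hmε : 0 < ε * m := by positivity
  have p0 : 0 < ε * V0 := by positivity
  have p1 : 0 < ε * V1 := by positivity
  have p2 : 0 < ε * V2 := by positivity
  have q0 : 0 ≤ ε * (V0 - m) := mul_nonneg hε.le (by linarith)
  have q1 : 0 ≤ ε * (V1 - m) := mul_nonneg hε.le (by linarith)
  have q2 : 0 ≤ ε * (V2 - m) := mul_nonneg hε.le (by linarith)
  obtain ⟨L, hL⟩ : ∃ L : ℕ → ℝ, ∀ k, L k = |P k 0 - q 0| + |P k 1 - q 1| + |P k 2 - q 2| :=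
    ⟨_, fun _ => rfl⟩
  have step : ∀ k, L (k+1) ≤ (1 - 3 * (ε * m)) * L k := by
    intro k
    have hd : (P k 0 - q 0) + (P k 1 - q 1) + (P k 2 - q 2) = 0 := by linarith [hs k]
    have a0 := abs_comb (1 - 2 * (ε * V0) - ε * m) (ε * (V1 - m)) (ε * (V2 - m))
      (P k 0 - q 0) (P k 1 - q 1) (P k 2 - q 2) (by linarith) q1 q2
    have a1 := abs_comb (ε * (V0 - m)) (1 - 2 * (ε * V1) - ε * m) (ε * (V2 - m))
      (P k 0 - q 0) (P k 1 - q 1) (P k 2 - q 2) q0 (by linarith) q2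
    have a2 := abs_comb (ε * (V0 - m)) (ε * (V1 - m)) (1 - 2 * (ε * V2) - ε * m)
      (P k 0 - q 0) (P k 1 - q 1) (P k 2 - q 2) q0 q1 (by linarith)
    have b0 : P (k+1) 0 - q 0 = (1 - 2 * (ε * V0) - ε * m) * (P k 0 - q 0)
        + (ε * (V1 - m)) * (P k 1 - q 1) + (ε * (V2 - m)) * (P k 2 - q 2) := by
      rw [r0]; linear_combination (ε * m) * hd - ε * e01 - ε * e02
    have b1 : P (k+1) 1 - q 1 = (ε * (V0 - m)) * (P k 0 - q 0)
        + (1 - 2 * (ε * V1) - ε * m) * (P k 1 - q 1) + (ε * (V2 - m)) * (P k 2 - q 2) := by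
      rw [r1]; linear_combination (ε * m) * hd + 2 * ε * e01 - ε * e02
    have b2 : P (k+1) 2 - q 2 = (ε * (V0 - m)) * (P k 0 - q 0)
        + (ε * (V1 - m)) * (P k 1 - q 1) + (1 - 2 * (ε * V2) - ε * m) * (P k 2 - q 2) := by
      rw [r2]; linear_combination (ε * m) * hd - ε * e01 + 2 * ε * e02
    rw [← b0] at a0
    rw [← b1] at a1
    rw [← b2] at a2
    rw [hL, hL]
    linarith
  have hr0 : 0 ≤ 1 - 3 * (ε * m) := by linarith
  have hbd : ∀ k, L k ≤ (1 - 3 * (ε * m)) ^ k * L 0 := by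
    intro k
    induction k with
    | zero => simp
    | succ k ih =>
      calc L (k+1) ≤ (1 - 3 * (ε * m)) * L k := step k
        _ ≤ (1 - 3 * (ε * m)) * ((1 - 3 * (ε * m)) ^ k * L 0) :=
          mul_le_mul_of_nonneg_left ih hr0
        _ = _ := by ring
  have hlim : Filter.Tendsto (fun k => (1 - 3 * (ε * m)) ^ k * L 0) Filter.atTop (nhds 0) := by
    simpa using (tendsto_pow_atTop_nhds_zero_of_lt_one hr0 (by linarith)).mul_const (L 0)
  have hall : Filter.Tendsto P Filter.atTop (nhds q) := by
    rw [tendsto_pi_nhds]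
    intro i
    rw [tendsto_iff_dist_tendsto_zero]
    refine squeeze_zero (fun _ => dist_nonneg) (fun k => le_trans ?_ (hbd k)) hlim
    rw [Real.dist_eq, hL]
    have c0 := abs_nonneg (P k 0 - q 0)
    have c1 := abs_nonneg (P k 1 - q 1)
    have c2 := abs_nonneg (P k 2 - q 2)
    fin_cases i <;> simp only [Fin.zero_eta, Fin.mk_one, Fin.reduceFinMk] <;> linarith
  exact ⟨hall, (tendsto_pi_nhds.mp hall) 0⟩
end

section
/- Let V0, V1, V2 be strictly negative real numbers, let V̂ be the 3×3 real matrix with V̂_{mm} = 2*V_m and V̂_{mn} = -V_n for m ≠ n, set V := V1*V2 + V0*V2 + V0*V1 and ρ := (V1*V2/V, V0*V2/V, V0*V1/V). Then there exists ε₀ > 0 such that for every step size ε with 0 < ε ≤ ε₀ and every sequence P : ℕ → ℝ³ satisfying P(k+1) - P(k) = -ε V̂ P(k) for all k ≥ 0, the balance condition P_0(0) + P_1(0) + P_2(0) = 1, and P(0) ≠ ρ, the sequence P(k) does NOT converge to ρ; in fact ‖P(k) - ρ‖ → ∞ as k → ∞ (repulsive equilibrium). -/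
theorem repulsive_equilibrium (V0 V1 V2 : ℝ)
    (h0 : V0 < 0) (h1 : V1 < 0) (h2 : V2 < 0) :
    ∃ ε₀ > (0:ℝ), ∀ ε : ℝ, 0 < ε → ε ≤ ε₀ →
      ∀ P : ℕ → Fin 3 → ℝ,
        (∀ k : ℕ, P (k+1) - P k = -(ε • (dirMatrix V0 V1 V2).mulVec (P k))) →
        P 0 0 + P 0 1 + P 0 2 = 1 →
        P 0 ≠ equil V0 V1 V2 →
        ¬ Filter.Tendsto P Filter.atTop (nhds (equil V0 V1 V2)) ∧
        Filter.Tendsto (fun k => ‖P k - equil V0 V1 V2‖) Filter.atTop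
          Filter.atTop := by
  refine ⟨1, one_pos, ?_⟩
  intro ε hε _ P hP hsum hne
  have hV : 0 < V1*V2 + V0*V2 + V0*V1 := by
    have := mul_pos_of_neg_of_neg h1 h2
    have := mul_pos_of_neg_of_neg h0 h2
    have := mul_pos_of_neg_of_neg h0 h1
    linarith
  -- coordinates of the equilibrium
  obtain ⟨a, ha⟩ : ∃ a, a = equil V0 V1 V2 0 := ⟨_, rfl⟩
  obtain ⟨b, hb⟩ : ∃ b, b = equil V0 V1 V2 1 := ⟨_, rfl⟩
  obtain ⟨c, hc⟩ : ∃ c, c = equil V0 V1 V2 2 := ⟨_, rfl⟩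
  have habc : a + b + c = 1 := by
    rw [ha, hb, hc]; simp [equil]; rw [← add_div, ← add_div, div_self hV.ne']
  have hab : V0 * a = V1 * b := by
    rw [ha, hb]; simp [equil]; field_simp
  have hac : V0 * a = V2 * c := by
    rw [ha, hc]; simp [equil]; field_simp
  have r0 : ∀ k, P (k+1) 0 = P k 0 - ε * (2*V0*P k 0 - V1*P k 1 - V2*P k 2) := by
    intro k
    have := congrFun (hP k) 0
    simp [dirMatrix, dotProduct, Fin.sum_univ_three] at this
    linarith
  have r1 : ∀ k, P (k+1) 1 = P k 1 - ε * (2*V1*P k 1 - V0*P k 0 - V2*P k 2) := by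
    intro k
    have := congrFun (hP k) 1
    simp [dirMatrix, dotProduct, Fin.sum_univ_three] at this
    linarith
  have r2 : ∀ k, P (k+1) 2 = P k 2 - ε * (2*V2*P k 2 - V0*P k 0 - V1*P k 1) := by
    intro k
    have := congrFun (hP k) 2
    simp [dirMatrix, dotProduct, Fin.sum_univ_three] at this
    linarith
  have hs : ∀ k, P k 0 + P k 1 + P k 2 = 1 := by
    intro k
    induction k with
    | zero => exact hsum
    | succ k ih => rw [r0, r1, r2]; linarith
  obtain ⟨w, hw, hw0, hw1, hw2⟩ : ∃ w : ℝ, 0 < w ∧ w ≤ -V0 ∧ w ≤ -V1 ∧ w ≤ -V2 :=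
    ⟨min (-V0) (min (-V1) (-V2)), by simp [h0, h1, h2], by simp, by simp, by simp⟩
  obtain ⟨N, hN⟩ : ∃ N : ℕ → ℝ, ∀ k, N k = (P k 0 - a)^2 + (P k 1 - b)^2 + (P k 2 - c)^2 :=
    ⟨_, fun _ => rfl⟩
  have step : ∀ k, (1 + 6*ε*w) * N k ≤ N (k+1) := by
    intro k
    rw [hN, hN, r0, r1, r2]
    have hsk := hs k
    obtain ⟨x, hx⟩ : ∃ x, x = P k 0 - a := ⟨_, rfl⟩
    obtain ⟨y, hy⟩ : ∃ y, y = P k 1 - b := ⟨_, rfl⟩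
    obtain ⟨z, hz⟩ : ∃ z, z = P k 2 - c := ⟨_, rfl⟩
    have e0 : P k 0 = x + a := by linarith
    have e1 : P k 1 = y + b := by linarith
    have e2 : P k 2 = z + c := by linarith
    have hz' : z = -x - y := by linarith
    have f0 : P k 0 - ε * (2*V0*P k 0 - V1*P k 1 - V2*P k 2) - a
        = x - ε * (2*V0*x - V1*y - V2*z) := by
      rw [e0, e1, e2]; linear_combination (-ε) * hab + (-ε) * hac
    have f1 : P k 1 - ε * (2*V1*P k 1 - V0*P k 0 - V2*P k 2) - b
        = y - ε * (2*V1*y - V0*x - V2*z) := by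
      rw [e0, e1, e2]; linear_combination (2*ε) * hab - ε * hac
    have f2 : P k 2 - ε * (2*V2*P k 2 - V0*P k 0 - V1*P k 1) - c
        = z - ε * (2*V2*z - V0*x - V1*y) := by
      rw [e0, e1, e2]; linear_combination (2*ε) * hac - ε * hab
    rw [f0, f1, f2, ← hx, ← hy, ← hz]
    have g0 : 0 ≤ ε * ((-V0 - w) * x^2) :=
      mul_nonneg hε.le (mul_nonneg (by linarith) (sq_nonneg x))
    have g1 : 0 ≤ ε * ((-V1 - w) * y^2) :=
      mul_nonneg hε.le (mul_nonneg (by linarith) (sq_nonneg y))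
    have g2 : 0 ≤ ε * ((-V2 - w) * z^2) :=
      mul_nonneg hε.le (mul_nonneg (by linarith) (sq_nonneg z))
    have s0 := sq_nonneg (ε * (2*V0*x - V1*y - V2*z))
    have s1 := sq_nonneg (ε * (2*V1*y - V0*x - V2*z))
    have s2 := sq_nonneg (ε * (2*V2*z - V0*x - V1*y))
    subst hz'
    linarith
  have grow : ∀ k, (1 + 6*ε*w)^k * N 0 ≤ N k := by
    intro k
    induction k with
    | zero => simp
    | succ k ih =>
      refine le_trans ?_ (step k)
      rw [pow_succ']
      have : 0 ≤ 1 + 6*ε*w := by positivity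
      nlinarith [mul_le_mul_of_nonneg_left ih this]
  have hN0 : 0 < N 0 := by
    rw [hN]
    by_contra hcon
    have q0 := sq_nonneg (P 0 0 - a)
    have q1 := sq_nonneg (P 0 1 - b)
    have q2 := sq_nonneg (P 0 2 - c)
    have z0 : (P 0 0 - a)^2 = 0 := by linarith
    have z1 : (P 0 1 - b)^2 = 0 := by linarith
    have z2 : (P 0 2 - c)^2 = 0 := by linarith
    apply hne
    ext i
    fin_cases i
    · exact (sub_eq_zero.1 (pow_eq_zero_iff two_ne_zero |>.1 z0)).trans ha
    · exact (sub_eq_zero.1 (pow_eq_zero_iff two_ne_zero |>.1 z1)).trans hb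
    · exact (sub_eq_zero.1 (pow_eq_zero_iff two_ne_zero |>.1 z2)).trans hc
  have hbound : ∀ k, Real.sqrt (N k / 3) ≤ ‖P k - equil V0 V1 V2‖ := by
    intro k
    apply Real.sqrt_le_iff.2
    refine ⟨norm_nonneg _, ?_⟩
    have n0 := norm_le_pi_norm (P k - equil V0 V1 V2) 0
    have n1 := norm_le_pi_norm (P k - equil V0 V1 V2) 1
    have n2 := norm_le_pi_norm (P k - equil V0 V1 V2) 2
    rw [Real.norm_eq_abs, Pi.sub_apply] at n0 n1 n2
    rw [← ha] at n0
    rw [← hb] at n1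
    rw [← hc] at n2
    have m0 := sq_le_sq' (abs_le.1 n0).1 (abs_le.1 n0).2
    have m1 := sq_le_sq' (abs_le.1 n1).1 (abs_le.1 n1).2
    have m2 := sq_le_sq' (abs_le.1 n2).1 (abs_le.1 n2).2
    rw [hN]
    linarith
  have hNtop : Filter.Tendsto N Filter.atTop Filter.atTop := by
    refine Filter.tendsto_atTop_mono grow ?_
    refine Filter.Tendsto.atTop_mul_const hN0 ?_
    apply tendsto_pow_atTop_atTop_of_one_lt
    have : 0 < 6*ε*w := by positivity
    linarith
  have key : Filter.Tendsto (fun k => ‖P k - equil V0 V1 V2‖) Filter.atTop Filter.atTop :=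
    Filter.tendsto_atTop_mono hbound
      (Real.tendsto_sqrt_atTop.comp (hNtop.atTop_div_const (by norm_num)))
  refine ⟨fun h => ?_, key⟩
  exact not_tendsto_nhds_of_tendsto_atTop key _ (h.sub_const (equil V0 V1 V2)).norm
end

section
/- Let V0 and W be real numbers, set V1 = V2 = W, assume V := W² + 2*V0*W ≠ 0, and let V̂ be the 3×3 real matrix with V̂_{mm} = 2*V_m and V̂_{mn} = -V_n for m ≠ n, and ρ_0 := W²/V. Then every sequence P : ℕ → ℝ³ satisfying P(k+1) - P(k) = -V̂ P(k) for all k ≥ 0 and P_0(0) + P_1(0) + P_2(0) = 1 has the explicit first coordinate P_0(k) = ρ_0 + (1 - 2*V0 - W)^k · (P_0(0) - ρ_0) for all k ≥ 0. -/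
theorem symmetric_case_explicit (V0 W : ℝ)
    (hV : W^2 + 2*V0*W ≠ 0) (P : ℕ → Fin 3 → ℝ)
    (hP : ∀ k : ℕ, P (k+1) - P k = -((dirMatrix V0 W W).mulVec (P k)))
    (hinit : P 0 0 + P 0 1 + P 0 2 = 1) :
    ∀ k : ℕ, P k 0 = W^2 / (W^2 + 2*V0*W)
      + (1 - 2*V0 - W)^k * (P 0 0 - W^2 / (W^2 + 2*V0*W)) := by
  have hs : ∀ k : ℕ, P k 0 + P k 1 + P k 2 = 1 ∧
      P (k+1) 0 = P k 0 - 2*V0*P k 0 + W*(P k 1 + P k 2) := by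
    have step : ∀ k : ℕ, P (k+1) 0 = P k 0 - 2*V0*P k 0 + W*(P k 1 + P k 2) ∧
        P (k+1) 0 + P (k+1) 1 + P (k+1) 2 = P k 0 + P k 1 + P k 2 := by
      intro k
      have h0 := congrFun (hP k) 0
      have h1 := congrFun (hP k) 1
      have h2 := congrFun (hP k) 2
      simp [dirMatrix, Matrix.mulVec, dotProduct, Fin.sum_univ_three] at h0 h1 h2
      constructor <;> linarith
    intro k
    refine ⟨?_, (step k).1⟩
    induction k with
    | zero => exact hinit
    | succ k ih => rw [(step k).2, ih]
  have hW : W ≠ 0 := by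
    rintro rfl
    simp at hV
  have hrho : (2*V0 + W) * (W^2 / (W^2 + 2*V0*W)) = W := by
    rw [← mul_div_assoc, div_eq_iff hV]
    ring
  generalize W^2 / (W^2 + 2*V0*W) = r at hrho ⊢
  intro k
  induction k with
  | zero => simp
  | succ k ih =>
    obtain ⟨h1, h2⟩ := hs k
    have h3 : P k 1 + P k 2 = 1 - P k 0 := by linarith
    rw [h2, h3, ih, pow_succ]
    linear_combination -hrho
end

section
/- Let V0 and W be real numbers with V1 = V2 = W, V := W² + 2*V0*W ≠ 0, ρ_0 := W²/V, and let V̂ be the 3×3 real matrix with V̂_{mm} = 2*V_m and V̂_{mn} = -V_n for m ≠ n. Let P : ℕ → ℝ³ satisfy P(k+1) - P(k) = -V̂ P(k) for all k ≥ 0 and P_0(0) + P_1(0) + P_2(0) = 1. If 0 < 2*V0 + W < 2, then lim_{k→∞} P_0(k) = ρ_0; if instead |1 - 2*V0 - W| > 1 and P_0(0) ≠ ρ_0, then |P_0(k) - ρ_0| → ∞ as k → ∞, so P_0(k) does not converge to ρ_0. -/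
theorem symmetric_case_limit (V0 W : ℝ)
    (hV : W^2 + 2*V0*W ≠ 0) (P : ℕ → Fin 3 → ℝ)
    (hP : ∀ k : ℕ, P (k+1) - P k = -((dirMatrix V0 W W).mulVec (P k)))
    (hinit : P 0 0 + P 0 1 + P 0 2 = 1) :
    (0 < 2*V0 + W → 2*V0 + W < 2 →
      Filter.Tendsto (fun k => P k 0) Filter.atTop
        (nhds (W^2 / (W^2 + 2*V0*W)))) ∧
    (1 < |1 - 2*V0 - W| → P 0 0 ≠ W^2 / (W^2 + 2*V0*W) →
      Filter.Tendsto (fun k => |P k 0 - W^2 / (W^2 + 2*V0*W)|) Filter.atTop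
        Filter.atTop ∧
      ¬ Filter.Tendsto (fun k => P k 0) Filter.atTop
        (nhds (W^2 / (W^2 + 2*V0*W)))) := by
  have hW : W ≠ 0 := by
    rintro rfl; simp at hV
  have hS : W + 2*V0 ≠ 0 := by
    intro h; apply hV; linear_combination W * h
  have hρ : W^2 / (W^2 + 2*V0*W) = W / (W + 2*V0) := by
    rw [div_eq_div_iff hV hS]; ring
  rw [hρ]
  have h0 : ∀ k, P (k+1) 0 = P k 0 - 2*V0*P k 0 + W * P k 1 + W * P k 2 := by
    intro k
    have h := congrFun (hP k) 0
    simp [dirMatrix, Matrix.mulVec, dotProduct, Fin.sum_univ_three] at h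
    linarith
  have h1 : ∀ k, P (k+1) 1 = P k 1 + V0*P k 0 - 2 * W * P k 1 + W * P k 2 := by
    intro k
    have h := congrFun (hP k) 1
    simp [dirMatrix, Matrix.mulVec, dotProduct, Fin.sum_univ_three] at h
    linarith
  have h2 : ∀ k, P (k+1) 2 = P k 2 + V0*P k 0 + W * P k 1 - 2 * W * P k 2 := by
    intro k
    have h := congrFun (hP k) 2
    simp [dirMatrix, Matrix.mulVec, dotProduct, Fin.sum_univ_three] at h
    linarith
  have hsum : ∀ k, P k 0 + P k 1 + P k 2 = 1 := by
    intro k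
    induction k with
    | zero => exact hinit
    | succ k ih => rw [h0, h1, h2]; linarith
  have hfix : W / (W + 2*V0) * (W + 2*V0) = W := div_mul_cancel₀ _ hS
  generalize W / (W + 2*V0) = r at *
  have key : ∀ k, P k 0 - r = (1 - 2*V0 - W)^k * (P 0 0 - r) := by
    intro k
    induction k with
    | zero => simp
    | succ k ih =>
      rw [pow_succ, h0]
      linear_combination (1 - 2*V0 - W) * ih + W * hsum k - hfix
  constructor
  · intro ha hb
    have hq : |1 - 2*V0 - W| < 1 := by rw [abs_lt]; constructor <;> linarith
    have ht := ((tendsto_pow_atTop_nhds_zero_of_abs_lt_one hq).mul_const (P 0 0 - r)).add_const r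
    simp only [← key] at ht
    simpa using ht
  · intro ha hne
    have hd : Filter.Tendsto (fun k => |P k 0 - r|) Filter.atTop Filter.atTop := by
      have he : (fun k => |P k 0 - r|) =
          fun k => |1 - 2*V0 - W|^k * |P 0 0 - r| := by
        funext k
        rw [key k, abs_mul, abs_pow]
      rw [he]
      exact (tendsto_pow_atTop_atTop_of_one_lt ha).atTop_mul_const
        (abs_pos.mpr (sub_ne_zero.mpr hne))
    refine ⟨hd, fun h => ?_⟩
    exact not_tendsto_nhds_of_tendsto_atTop hd _ (h.sub_const r).abs
end

section
/- Let V0, V1, V2 be strictly negative real numbers. Then V := V1*V2 + V0*V2 + V0*V1 > 0 and the equilibrium coordinates ρ_0 = V1*V2/V, ρ_1 = V0*V2/V, ρ_2 = V0*V1/V all satisfy 0 < ρ_m < 1; moreover every nonzero complex eigenvalue of the matrix V̂ (with V̂_{mm} = 2*V_m, V̂_{mn} = -V_n for m ≠ n) has strictly negative real part. -/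
theorem repulsive_spectral (V0 V1 V2 : ℝ)
    (h0 : V0 < 0) (h1 : V1 < 0) (h2 : V2 < 0) :
    0 < V1*V2 + V0*V2 + V0*V1 ∧
    (∀ m : Fin 3, 0 < equil V0 V1 V2 m ∧ equil V0 V1 V2 m < 1) ∧
    (∀ μ : ℂ, Module.End.HasEigenvalue
        (Matrix.mulVecLin ((dirMatrix V0 V1 V2).map Complex.ofReal)) μ →
        μ ≠ 0 → μ.re < 0) := by
  have p0 := mul_pos_of_neg_of_neg h1 h2
  have p1 := mul_pos_of_neg_of_neg h0 h2
  have p2 := mul_pos_of_neg_of_neg h0 h1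
  have hV : 0 < V1*V2 + V0*V2 + V0*V1 := by linarith
  refine ⟨hV, ?_, ?_⟩
  · intro m
    fin_cases m
    · exact ⟨div_pos p0 hV, (div_lt_one hV).2 (by linarith)⟩
    · exact ⟨div_pos p1 hV, (div_lt_one hV).2 (by linarith)⟩
    · exact ⟨div_pos p2 hV, (div_lt_one hV).2 (by linarith)⟩
  · intro μ hμ hne
    obtain ⟨x, hx⟩ := hμ.exists_hasEigenvector
    have hx1 := hx.apply_eq_smul
    have hx0 := hx.2
    rw [Matrix.mulVecLin_apply] at hx1
    have hdet : ((dirMatrix V0 V1 V2).map Complex.ofReal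
        - μ • (1 : Matrix (Fin 3) (Fin 3) ℂ)).det = 0 := by
      apply Matrix.exists_mulVec_eq_zero_iff.1
      refine ⟨x, hx0, ?_⟩
      rw [Matrix.sub_mulVec, hx1, Matrix.smul_mulVec, Matrix.one_mulVec, sub_self]
    rw [Matrix.det_fin_three] at hdet
    simp [dirMatrix, Matrix.one_apply] at hdet
    have hq : μ * (μ^2 - 2*((V0:ℂ)+V1+V2)*μ + 3*((V1:ℂ)*V2+V0*V2+V0*V1)) = 0 := by
      linear_combination -hdet
    have hq2 := (mul_eq_zero.1 hq).resolve_left hne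
    have hre := congrArg Complex.re hq2
    have him := congrArg Complex.im hq2
    simp [pow_two] at hre him
    have him2 : μ.im * (μ.re - (V0+V1+V2)) = 0 := by linarith
    rcases mul_eq_zero.1 him2 with h | h
    · by_contra hc
      push Not at hc
      rw [h] at hre
      nlinarith [mul_nonneg hc (by linarith : 0 ≤ -(V0+V1+V2)), mul_nonneg hc hc]
    · linarith
end
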